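/- Define, for 0 < x < 27/4 and z := 4x/27, the function V(x) := (1+√(1−z))^{1/3} · z^{−2/3} / (9π√(3(1−z))) + (1+√(1−z))^{−1/3} · z^{−1/3} / (9π√(3(1−z))). Then for every natural number n, ∫₀^{27/4} x^n V(x) dx = C(3n, n); in particular V is a probability density on (0, 27/4). -/

import Mathlib

open MeasureTheory Real

/-- Generalized binomial coefficient `C(a,n) = a(a-1)⋯(a-n+1)/n!`. -/
noncomputable def gbinom (a : ℝ) (n : ℕ) : ℝ :=
  (∏ i ∈ Finset.range n, (a - i)) / (n.factorial : ℝ)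

/-- The density function `V_{3,0}` of the measure `ν(3,0)`. -/
noncomputable def V30 (x : ℝ) : ℝ :=
  (1 + Real.sqrt (1 - 4 * x / 27)) ^ ((1:ℝ)/3) * (4 * x / 27) ^ (-(2:ℝ)/3)
      / (9 * Real.pi * Real.sqrt (3 * (1 - 4 * x / 27)))
    + (1 + Real.sqrt (1 - 4 * x / 27)) ^ (-(1:ℝ)/3) * (4 * x / 27) ^ (-(1:ℝ)/3)
      / (9 * Real.pi * Real.sqrt (3 * (1 - 4 * x / 27)))

lemma betaR (a b : ℝ) (ha : 0 < a) (hb : 0 < b) :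
    IntervalIntegrable (fun t : ℝ => t ^ (a-1) * (1-t) ^ (b-1)) volume 0 1 ∧
    ∫ t in (0:ℝ)..1, t ^ (a-1) * (1-t) ^ (b-1) = Real.Gamma a * Real.Gamma b / Real.Gamma (a+b) := by
  have key : Set.EqOn (fun x : ℝ => (x : ℂ) ^ ((a:ℂ) - 1) * (1 - (x : ℂ)) ^ ((b:ℂ) - 1))
      (fun t : ℝ => ((t ^ (a-1) * (1-t) ^ (b-1) : ℝ) : ℂ)) (Set.Icc 0 1) := by
    intro t ht
    simp only
    push_cast
    rw [Complex.ofReal_cpow ht.1, Complex.ofReal_cpow (by linarith [ht.2])]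
    push_cast
    rfl
  have hc := Complex.betaIntegral_convergent (u := a) (v := b) (by simpa) (by simpa)
  constructor
  · rw [intervalIntegrable_iff_integrableOn_Ioc_of_le zero_le_one] at hc ⊢
    have h2 := hc.congr_fun (key.mono Set.Ioc_subset_Icc_self) measurableSet_Ioc
    have h3 := h2.re
    simp only [RCLike.re_to_complex, Complex.ofReal_re] at h3
    exact h3
  · have h := Complex.betaIntegral_eq_Gamma_mul_div a b (by simpa) (by simpa)
    rw [Complex.betaIntegral, intervalIntegral.integral_congr (by
      rw [Set.uIcc_of_le zero_le_one]; exact key), intervalIntegral.integral_ofReal] at h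
    rw [← Complex.ofReal_add, Complex.Gamma_ofReal, Complex.Gamma_ofReal, Complex.Gamma_ofReal] at h
    exact_mod_cast h

lemma gbinom_eq (n : ℕ) : gbinom (3 * (n:ℝ)) n =
    ((3*n).factorial : ℝ) / ((n.factorial : ℝ) * ((2*n).factorial : ℝ)) := by
  have h : (∏ i ∈ Finset.range n, (3 * (n:ℝ) - i)) = ((3*n).descFactorial n : ℝ) := by
    rw [Nat.descFactorial_eq_prod_range, Nat.cast_prod]
    refine Finset.prod_congr rfl fun i hi => ?_
    have := Finset.mem_range.1 hi
    rw [Nat.cast_sub (by omega)]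
    push_cast; rfl
  have h2 := Nat.factorial_mul_descFactorial (show n ≤ 3*n by omega)
  rw [show 3*n-n = 2*n by omega] at h2
  rw [gbinom, h, ← h2]
  have := Nat.factorial_ne_zero n
  have := Nat.factorial_ne_zero (2*n)
  push_cast
  field_simp

lemma gamma_eq (n : ℕ) : 27 ^ n * (Real.Gamma (n + 2/3) * Real.Gamma (n + 1/3)) =
    (2 * π / √3) * (((3*n).factorial : ℝ) / (n.factorial : ℝ)) := by
  induction n with
  | zero =>
    have h := Real.Gamma_mul_Gamma_one_sub (1/3)
    rw [show π * (1/3) = π/3 by ring, Real.sin_pi_div_three] at h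
    norm_num at h ⊢
    rw [mul_comm, h]
    field_simp
  | succ n ih =>
    have h1 := Real.Gamma_add_one (s := (n:ℝ) + 2/3) (by positivity)
    have h2 := Real.Gamma_add_one (s := (n:ℝ) + 1/3) (by positivity)
    push_cast
    rw [show (n:ℝ) + 1 + 2/3 = n + 2/3 + 1 by ring, show (n:ℝ) + 1 + 1/3 = n + 1/3 + 1 by ring, h1, h2,
      show 3 * (n+1) = 3*n+1+1+1 by ring, Nat.factorial_succ, Nat.factorial_succ, Nat.factorial_succ,
      Nat.factorial_succ]
    have h3 : (27:ℝ) ^ (n+1) * (((n:ℝ) + 2/3) * Real.Gamma (n + 2/3) * (((n:ℝ) + 1/3) * Real.Gamma (n + 1/3)))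
      = 27 * ((n:ℝ) + 2/3) * ((n:ℝ) + 1/3) * (27 ^ n * (Real.Gamma (n + 2/3) * Real.Gamma (n + 1/3))) := by ring
    rw [h3, ih]
    have := Nat.factorial_ne_zero n
    push_cast
    field_simp
    ring

lemma integrand_eq (n : ℕ) (t : ℝ) (h1 : 1/2 < t) (h2 : t < 1) :
    |27 * (1 - 2*t)| * ((27 * (t * (1-t))) ^ n * V30 (27 * (t * (1-t)))) =
    27 ^ n * (√3 / (2*π)) * (t ^ ((n:ℝ) + 2/3 - 1) * (1-t) ^ ((n:ℝ) + 1/3 - 1)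
      + (1-t) ^ ((n:ℝ) + 2/3 - 1) * (1-(1-t)) ^ ((n:ℝ) + 1/3 - 1)) := by
  have ht : 0 < t := by linarith
  have hu : 0 < 1 - t := by linarith
  have hs : 0 < 2*t-1 := by linarith
  have e1 : 1 - 4 * (27 * (t * (1-t))) / 27 = (2*t-1)^2 := by ring
  have e2 : 4 * (27 * (t * (1-t))) / 27 = (2*t) * (2*(1-t)) := by ring
  rw [V30, e1, Real.sqrt_mul (by norm_num), Real.sqrt_sq hs.le, e2, abs_of_neg (by linarith)]
  rw [show 1 + (2*t-1) = 2*t by ring, show 1 - (1-t) = t by ring]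
  generalize hU : 1 - t = u at *
  have f1 : (2*t) ^ ((1:ℝ)/3) * ((2*t) * (2*u)) ^ (-(2:ℝ)/3) = t ^ (-(1:ℝ)/3) * u ^ (-(2:ℝ)/3) / 2 := by
    rw [Real.mul_rpow (x := 2*t) (y := 2*u) (by positivity) (by positivity), ← mul_assoc, ← Real.rpow_add (by positivity),
      Real.mul_rpow (by positivity) (by positivity), Real.mul_rpow (by positivity) (by positivity)]
    have : (2:ℝ) ^ ((1:ℝ)/3 + -2/3) * 2 ^ (-(2:ℝ)/3) = 1/2 := by
      rw [← Real.rpow_add (by norm_num)]; norm_num [Real.rpow_neg_one]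
    rw [show (1:ℝ)/3 + -2/3 = -1/3 by norm_num] at *
    linear_combination t ^ (-(1:ℝ)/3) * u ^ (-(2:ℝ)/3) * this
  have f2 : (2*t) ^ (-(1:ℝ)/3) * ((2*t) * (2*u)) ^ (-(1:ℝ)/3) = t ^ (-(2:ℝ)/3) * u ^ (-(1:ℝ)/3) / 2 := by
    rw [Real.mul_rpow (x := 2*t) (y := 2*u) (by positivity) (by positivity), ← mul_assoc, ← Real.rpow_add (by positivity),
      Real.mul_rpow (by positivity) (by positivity), Real.mul_rpow (by positivity) (by positivity)]
    have : (2:ℝ) ^ (-(1:ℝ)/3 + -1/3) * 2 ^ (-(1:ℝ)/3) = 1/2 := by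
      rw [← Real.rpow_add (by norm_num)]; norm_num [Real.rpow_neg_one]
    rw [show -(1:ℝ)/3 + -1/3 = -2/3 by norm_num] at *
    linear_combination t ^ (-(2:ℝ)/3) * u ^ (-(1:ℝ)/3) * this
  rw [f1, f2]
  have g1 : ∀ x : ℝ, 0 < x → x ^ ((n:ℝ) + 2/3 - 1) = x ^ n * x ^ (-(1:ℝ)/3) := fun x hx => by
    rw [← Real.rpow_natCast, ← Real.rpow_add hx]; congr 1; ring
  have g2 : ∀ x : ℝ, 0 < x → x ^ ((n:ℝ) + 1/3 - 1) = x ^ n * x ^ (-(2:ℝ)/3) := fun x hx => by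
    rw [← Real.rpow_natCast, ← Real.rpow_add hx]; congr 1; ring
  rw [g1 t ht, g1 u hu, g2 t ht, g2 u hu, mul_pow, mul_pow]
  have h3 : √3 * √3 = 3 := Real.mul_self_sqrt (by norm_num)
  have h30 : √3 ≠ 0 := by positivity
  generalize t ^ (-(1:ℝ)/3) = A
  generalize t ^ (-(2:ℝ)/3) = B
  generalize u ^ (-(1:ℝ)/3) = C
  generalize u ^ (-(2:ℝ)/3) = D
  have c : -(27 * (1 - 2*t)) / (9 * π * (√3 * (2*t-1))) = √3 / π := by
    rw [div_eq_div_iff (by positivity) (by positivity)]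
    linear_combination (-9 * (2*t-1) * π) * h3
  have := Real.pi_pos.ne'
  linear_combination (27^n * (t^n*u^n) * (A*D + B*C) / 2) * c

theorem density_p_three (n : ℕ) :
    (∫ x in (0:ℝ)..(27/4), x ^ n * V30 x) = gbinom (3 * (n : ℝ)) n := by
  have him : (fun t : ℝ => 27 * (t * (1-t))) '' Set.Ioo (1/2) 1 = Set.Ioo 0 (27/4) := by
    ext x
    constructor
    · rintro ⟨t, ⟨h1, h2⟩, rfl⟩
      simp only [Set.mem_Ioo]
      constructor <;> nlinarith
    · rintro ⟨h1, h2⟩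
      have hz : 0 < 1 - 4*x/27 := by linarith
      have hs := Real.sq_sqrt hz.le
      have hp := Real.sqrt_pos.2 hz
      refine ⟨(1 + √(1 - 4*x/27))/2, ⟨by linarith, ?_⟩, ?_⟩
      · nlinarith
      · simp only
        linear_combination (-27/4) * hs
  have hinj : Set.InjOn (fun t : ℝ => 27 * (t * (1-t))) (Set.Ioo (1/2) 1) := by
    intro s hs t ht h
    simp only at h
    have : (s - t) * (s + t - 1) = 0 := by linarith
    rcases mul_eq_zero.1 this with h | h
    · linarith
    · linarith [hs.1, ht.1]
  have hder : ∀ t ∈ Set.Ioo (1/2:ℝ) 1, HasDerivWithinAt (fun t : ℝ => 27 * (t * (1-t)))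
      (27 * (1 - 2*t)) (Set.Ioo (1/2) 1) t := by
    intro t _
    have := (((hasDerivAt_id t).mul ((hasDerivAt_id t).const_sub 1)).const_mul 27).hasDerivWithinAt
      (s := Set.Ioo (1/2) 1)
    refine this.congr_deriv ?_
    simp; ring
  have hcv := integral_image_eq_integral_abs_deriv_smul measurableSet_Ioo hder hinj
    (fun x => x ^ n * V30 x)
  simp only [smul_eq_mul] at hcv
  rw [intervalIntegral.integral_of_le (by norm_num), integral_Ioc_eq_integral_Ioo, ← him, hcv,
    setIntegral_congr_fun measurableSet_Ioo (fun t ht => integrand_eq n t ht.1 ht.2),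
    ← integral_Ioc_eq_integral_Ioo, ← intervalIntegral.integral_of_le (by norm_num),
    intervalIntegral.integral_const_mul]
  obtain ⟨hi, hv⟩ := betaR (n + 2/3) (n + 1/3) (by positivity) (by positivity)
  set g : ℝ → ℝ := fun t => t ^ ((n:ℝ) + 2/3 - 1) * (1-t) ^ ((n:ℝ) + 1/3 - 1) with hg
  have i1 : IntervalIntegrable g volume 0 (1/2) :=
    hi.mono_set (by rw [Set.uIcc_of_le, Set.uIcc_of_le] <;> norm_num; exact Set.Icc_subset_Icc le_rfl (by norm_num))
  have i2 : IntervalIntegrable g volume (1/2) 1 :=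
    hi.mono_set (by rw [Set.uIcc_of_le, Set.uIcc_of_le] <;> norm_num; exact Set.Icc_subset_Icc (by norm_num) le_rfl)
  have i3 : IntervalIntegrable (fun t => g (1-t)) volume (1/2) 1 := by
    have := (i1.comp_sub_left 1).symm
    norm_num at this ⊢
    exact this
  have hsum : (∫ t in (1/2:ℝ)..1, (g t + g (1-t))) = ∫ t in (0:ℝ)..1, g t := by
    rw [intervalIntegral.integral_add i2 i3, intervalIntegral.integral_comp_sub_left g 1,
      ← intervalIntegral.integral_add_adjacent_intervals i1 i2, add_comm]
    norm_num
  change _ * (∫ t in (1/2:ℝ)..1, (g t + g (1-t))) = _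
  rw [hsum, hv, gbinom_eq, show (n:ℝ) + 2/3 + (n + 1/3) = ((2*n : ℕ):ℝ) + 1 by push_cast; ring,
    Real.Gamma_nat_eq_factorial]
  have hG := gamma_eq n
  have hπ := Real.pi_pos.ne'
  have h30 : √3 ≠ 0 := by positivity
  have : 27 ^ n * (√3 / (2*π)) * (Real.Gamma (n + 2/3) * Real.Gamma (n + 1/3) / ((2*n).factorial : ℝ))
    = (27 ^ n * (Real.Gamma (n + 2/3) * Real.Gamma (n + 1/3))) * (√3 / (2*π)) / ((2*n).factorial : ℝ) := by ring
  rw [this, hG]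
  have := Nat.factorial_ne_zero n
  have := Nat.factorial_ne_zero (2*n)
  field_simp
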